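/- arXiv:2111.06308 — 2 statements merged into one kernel-verified Lean document; each statement's English description precedes it below -/
import Mathlib

section
/- For every k there exists a directed layered graph on O(k³) vertices that is a local optimum of single-edge local search (no directed edge (u,v) with disc(v) > disc(u)+2) and has a vertex of discrepancy k. Hence local optima on general graphs can have discrepancy Ω(n^{1/3}) where n is the number of vertices. -/
open Finset

def inDeg {V : Type*} [DecidableEq V] (D : Finset (V × V)) (v : V) : ℕ :=
  (D.filter (fun e => e.2 = v)).card

def outDeg {V : Type*} [DecidableEq V] (D : Finset (V × V)) (v : V) : ℕ :=
  (D.filter (fun e => e.1 = v)).card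

def disc {V : Type*} [DecidableEq V] (D : Finset (V × V)) (v : V) : ℤ :=
  (inDeg D v : ℤ) - (outDeg D v : ℤ)

/-- Layer sizes. -/
def lsize (k i : ℕ) : ℕ :=
  if i ≤ k then (if i % 2 = 0 then 1 + (i / 2) * (k - i) else (i / 2 + 1) * (k + 1 - i)) else 0

lemma exists_layers (n : ℕ → ℕ) (L : ℕ) (h : ∀ i, L ≤ i → n i = 0) :
    ∃ (N : ℕ) (l : Fin N → ℕ), (∀ j, (univ.filter (fun x => l x = j)).card = n j) ∧
      N = ∑ i ∈ range L, n i := by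
  classical
  let V := Σ i : Fin L, Fin (n i)
  let e : V ≃ Fin (Fintype.card V) := Fintype.equivFin V
  refine ⟨Fintype.card V, fun x => ((e.symm x).1 : ℕ), ?_, ?_⟩
  · intro j
    have h1 : (univ.filter (fun x => ((e.symm x).1 : ℕ) = j)).card
        = (univ.filter (fun x : V => (x.1 : ℕ) = j)).card := by
      apply Finset.card_bij (fun a _ => e.symm a)
      · intro a ha; simpa using ha
      · intro a _ b _ hab; exact e.symm.injective hab
      · intro b hb; exact ⟨e b, by simpa using hb, by simp⟩
    rw [h1]
    by_cases hj : j < L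
    · have h2 : (univ.filter (fun x : V => (x.1 : ℕ) = j))
          = (univ : Finset (Fin (n j))).map ⟨fun y => (⟨⟨j, hj⟩, y⟩ : V), by
              intro a b hab; simpa [V] using hab⟩ := by
        ext ⟨⟨i, hi⟩, y⟩
        simp only [mem_filter, mem_univ, true_and, mem_map]
        constructor
        · intro hh
          change i = j at hh
          subst hh
          exact ⟨y, rfl⟩
        · rintro ⟨a, ha⟩
          have := congrArg (fun x : V => (x.1 : ℕ)) ha
          exact this.symm
      rw [h2]; simp
    · rw [h j (by omega), card_eq_zero, filter_eq_empty_iff]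
      intro x _ hx
      exact hj (hx ▸ x.1.2)
  · simp [V, Fintype.card_sigma, Finset.sum_range]

lemma lsize_even (k m : ℕ) (h : 2 * m ≤ k) : (lsize k (2 * m) : ℤ) = 1 + m * (k - 2 * m) := by
  have : 2 * m % 2 = 0 := by omega
  have h2 : 2 * m / 2 = m := by omega
  simp only [lsize, h, this, h2, if_true]
  push_cast [h]; ring

lemma lsize_odd (k m : ℕ) (h : 2 * m + 1 ≤ k) :
    (lsize k (2 * m + 1) : ℤ) = (m + 1) * (k - 2 * m) := by
  have : ¬ ((2 * m + 1) % 2 = 0) := by omega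
  have h2 : (2 * m + 1) / 2 = m := by omega
  have h3 : k + 1 - (2 * m + 1) = k - 2 * m := by omega
  simp only [lsize, h, this, h2, h3, if_true, if_false]
  have : 2 * m ≤ k := by omega
  push_cast [this]; ring

lemma lsize_big (k i : ℕ) (h : k < i) : lsize k i = 0 := by
  simp [lsize, Nat.not_le.mpr h]

lemma lsize_le (k i : ℕ) : lsize k i ≤ k ^ 2 + k + 1 := by
  unfold lsize
  split_ifs with h1 h2
  · have : i / 2 * (k - i) ≤ k * k := Nat.mul_le_mul (by omega) (by omega)
    nlinarith
  · have : (i / 2 + 1) * (k + 1 - i) ≤ (k + 1) * k := Nat.mul_le_mul (by omega) (by omega)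
    nlinarith
  · omega

lemma lsize_step (k i : ℕ) (h : i + 2 ≤ k) :
    (lsize k (i + 2) : ℤ) - lsize k i = k - 2 * (i + 1) := by
  rcases Nat.even_or_odd' i with ⟨m, rfl | rfl⟩
  · have := lsize_even k (m + 1) (by omega)
    rw [show 2 * m + 2 = 2 * (m + 1) by ring, this, lsize_even k m (by omega)]
    push_cast; ring
  · have := lsize_odd k (m + 1) (by omega)
    rw [show 2 * m + 1 + 2 = 2 * (m + 1) + 1 by ring, this, lsize_odd k m (by omega)]
    push_cast; ring

lemma lsize_last (i : ℕ) : lsize (i + 1) i ≤ i + 1 := by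
  zify
  rcases Nat.even_or_odd' i with ⟨m, rfl | rfl⟩
  · rw [lsize_even _ m (by omega)]
    push_cast; linarith
  · rw [lsize_odd _ m (by omega)]
    push_cast; linarith

lemma lsize_one (k : ℕ) : lsize k 1 = k := by
  rcases k with _ | k <;> simp [lsize]

/-- **`Ω(n^{1/3})` lower bound for single-edge local search.** For every `k` there is a
directed graph on `O(k³)` vertices that is a local optimum of edge-flip local search
(no directed edge `(u,v)` with `disc v > disc u + 2`) and has a vertex of
discrepancy `k`. -/
theorem stmt14 :
    ∃ C : ℕ, 0 < C ∧
      ∀ k : ℕ,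
        ∃ (N : ℕ) (D : Finset (Fin N × Fin N)),
          (∀ e ∈ D, disc D e.2 ≤ disc D e.1 + 2) ∧
          (∃ v : Fin N, disc D v = (k : ℤ)) ∧
          N ≤ C * (k ^ 3 + 1) := by
  refine ⟨6, by norm_num, fun k => ?_⟩
  obtain ⟨N, l, hl, hN⟩ := exists_layers (lsize k) (k + 1) (fun i hi => lsize_big k i hi)
  let D : Finset (Fin N × Fin N) := univ.filter (fun e => l e.1 = l e.2 + 1)
  have hin : ∀ v, inDeg D v = lsize k (l v + 1) := by
    intro v
    rw [← hl, inDeg]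
    apply Finset.card_bij (fun a _ => a.1)
    · rintro ⟨a, b⟩ h
      simp only [D, mem_filter, mem_univ, true_and] at h ⊢
      rw [h.1, h.2]
    · rintro ⟨a, b⟩ h ⟨a', b'⟩ h' haa
      simp only [D, mem_filter, mem_univ, true_and] at h h' haa
      rw [haa, h.2, h'.2]
    · intro b hb
      refine ⟨(b, v), ?_, rfl⟩
      simpa [D] using hb
  have hout : ∀ v i, l v = i + 1 → outDeg D v = lsize k i := by
    intro v i hv
    rw [← hl, outDeg]
    apply Finset.card_bij (fun a _ => a.2)
    · rintro ⟨a, b⟩ h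
      simp only [D, mem_filter, mem_univ, true_and] at h ⊢
      rw [h.2] at h; omega
    · rintro ⟨a, b⟩ h ⟨a', b'⟩ h' haa
      simp only [D, mem_filter, mem_univ, true_and] at h h' haa
      rw [haa, h.2, h'.2]
    · intro b hb
      refine ⟨(v, b), ?_, rfl⟩
      simp only [D, mem_filter, mem_univ, true_and, and_true] at hb ⊢
      omega
  have hout0 : ∀ v, l v = 0 → outDeg D v = 0 := by
    intro v hv
    rw [outDeg, card_eq_zero, filter_eq_empty_iff]
    rintro ⟨a, b⟩ h hab
    change a = v at hab
    subst hab
    simp only [D, mem_filter, mem_univ, true_and] at h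
    omega
  have hle : ∀ v, l v ≤ k := by
    intro v
    by_contra hv
    have h1 := hl (l v)
    rw [lsize_big k _ (by omega), card_eq_zero, filter_eq_empty_iff] at h1
    exact h1 (mem_univ v) rfl
  have hd0 : ∀ v, l v = 0 → disc D v = k := by
    intro v hv
    rw [disc, hin, hout0 v hv, hv, lsize_one]; simp
  have hdlt : ∀ v, l v < k → disc D v = k - 2 * (l v : ℤ) := by
    intro v hv
    rcases h : l v with _ | i
    · rw [hd0 v h]; simp
    · rw [disc, hin, hout v i h, h, lsize_step k i (by omega)]; push_cast; ring
  have hdge : ∀ v, (k : ℤ) - 2 * (l v : ℤ) ≤ disc D v := by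
    intro v
    rcases (hle v).lt_or_eq with hv | hv
    · exact (hdlt v hv).ge
    · rcases h : l v with _ | i
      · rw [hd0 v h]; simp
      · have hk : k = i + 1 := by omega
        rw [disc, hin, hout v i h, lsize_big k _ (by omega)]
        have := lsize_last i
        rw [← hk] at this
        push_cast; omega
  refine ⟨N, D, ?_, ?_, ?_⟩
  · rintro ⟨u, v⟩ h
    simp only [D, mem_filter, mem_univ, true_and] at h
    have h1 := hle u
    have h2 := hdlt v (by omega)
    have h3 := hdge u
    simp only
    rw [h2]
    rw [h] at h3
    push_cast at h3
    linarith
  · have h1 := hl 0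
    have : 0 < lsize k 0 := by simp [lsize]
    rw [← h1, card_pos] at this
    obtain ⟨v, hv⟩ := this
    exact ⟨v, hd0 v (by simpa using hv)⟩
  · have h1 : N ≤ (k + 1) * (k ^ 2 + k + 1) := by
      rw [hN]
      calc _ ≤ ∑ i ∈ range (k + 1), (k ^ 2 + k + 1) := sum_le_sum (fun i _ => lsize_le k i)
        _ = _ := by simp
    have h2 : k ^ 2 ≤ k ^ 3 := by
      rcases k with _ | k
      · simp
      · exact Nat.pow_le_pow_right (by omega) (by norm_num)
    have h3 : k ≤ k ^ 2 := Nat.le_self_pow (by norm_num) k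
    nlinarith
end

section
/- In the fully dynamic vector balancing problem with vectors in [−1,1]^n, there is an algorithm that after every insertion or deletion maintains a signing of discrepancy O(√n) with amortized recourse O(n·log T) per update, against an adaptive adversary, where T is the number of updates. In particular, the distributed Bárány–Grinberg tree maintains at each tree node v an assignment y^v ∈ [−1,1]^{P_v} with ∑_{i∈P_v} y^v_i a_i = 0 and at most n fractional coordinates, and a single vector update changes the maintained assignment in at most O(n·log T) coordinates. -/
open Finset

/-- An update: either insert a new vector, or delete the vector inserted at a given
(earlier) time step. -/
abbrev Update (n : ℕ) := (Fin n → ℝ) ⊕ ℕ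

/-- The set of time indices of the currently active (inserted and not yet deleted)
vectors after the first `t` updates. -/
def active {n : ℕ} (u : ℕ → Update n) : ℕ → Finset ℕ
  | 0 => ∅
  | t + 1 =>
    match u t with
    | Sum.inl _ => insert t (active u t)
    | Sum.inr s => (active u t).erase s

/-- The vector inserted at time `s` (junk if `u s` is a deletion). -/
def vecAt {n : ℕ} (u : ℕ → Update n) (s : ℕ) : Fin n → ℝ :=
  match u s with
  | Sum.inl v => v
  | Sum.inr _ => 0

/-- The signing produced by the (deterministic, online) algorithm `Alg` at time `t`:
it may depend only on the history of the first `t` updates. -/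
def sigOf {n : ℕ} (Alg : List (Update n) → ℕ → ℤ) (u : ℕ → Update n) (t : ℕ) :
    ℕ → ℤ :=
  Alg ((List.range t).map u)

namespace DVB

/-- sign of `s` in the coloring given by the set `A` -/
def sg (A : Finset ℕ) (s : ℕ) : ℝ := if s ∈ A then 1 else -1

lemma sum_sg_insert_not {F : Finset ℕ} {x : ℕ} (hx : x ∉ F) (a : ℕ → ℝ) {A : Finset ℕ} (hA : A ⊆ F) :
    ∑ s ∈ insert x F, sg A s * a s = ∑ s ∈ F, sg A s * a s - a x := by
  rw [Finset.sum_insert hx]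
  have : x ∉ A := fun h => hx (hA h)
  simp [sg, this]; ring

lemma sum_sg_insert {F : Finset ℕ} {x : ℕ} (hx : x ∉ F) (a : ℕ → ℝ) (A : Finset ℕ) :
    ∑ s ∈ insert x F, sg (insert x A) s * a s = ∑ s ∈ F, sg A s * a s + a x := by
  rw [Finset.sum_insert hx]
  have : ∑ s ∈ F, sg (insert x A) s * a s = ∑ s ∈ F, sg A s * a s := by
    apply Finset.sum_congr rfl
    intro s hs
    have : s ≠ x := fun h => hx (h ▸ hs)
    simp [sg, this]
  rw [this]; simp [sg]; ring

lemma moment2 (a : ℕ → ℝ) (ha : ∀ s, |a s| ≤ 1) (F : Finset ℕ) :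
    ∑ A ∈ F.powerset, (∑ s ∈ F, sg A s * a s) ^ 2 ≤ F.card * 2 ^ F.card := by
  induction F using Finset.induction_on with
  | empty => simp
  | insert x F hx ih =>
    rw [Finset.sum_powerset_insert hx]
    have h1 : ∑ A ∈ F.powerset, (∑ s ∈ insert x F, sg A s * a s) ^ 2
        = ∑ A ∈ F.powerset, (∑ s ∈ F, sg A s * a s - a x) ^ 2 := by
      apply Finset.sum_congr rfl
      intro A hA
      rw [sum_sg_insert_not hx a (Finset.mem_powerset.1 hA)]
    have hsq : a x ^ 2 ≤ 1 := by
      have := ha x; rw [← sq_abs]; nlinarith [abs_nonneg (a x)]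
    simp_rw [sum_sg_insert hx a]
    rw [h1, ← Finset.sum_add_distrib]
    calc _ = ∑ A ∈ F.powerset, (2 * (∑ s ∈ F, sg A s * a s) ^ 2 + 2 * a x ^ 2) := by
          apply Finset.sum_congr rfl; intros; ring
      _ = 2 * ∑ A ∈ F.powerset, (∑ s ∈ F, sg A s * a s) ^ 2 + 2 ^ F.card * (2 * a x ^ 2) := by
          rw [Finset.sum_add_distrib, ← Finset.mul_sum]; simp
      _ ≤ 2 * (F.card * 2 ^ F.card) + 2 ^ F.card * (2 * 1) := by gcongr
      _ = _ := by rw [Finset.card_insert_of_notMem hx]; push_cast; ring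

lemma moment4 (a : ℕ → ℝ) (ha : ∀ s, |a s| ≤ 1) (F : Finset ℕ) :
    ∑ A ∈ F.powerset, (∑ s ∈ F, sg A s * a s) ^ 4 ≤ 3 * F.card ^ 2 * 2 ^ F.card := by
  induction F using Finset.induction_on with
  | empty => simp
  | insert x F hx ih =>
    rw [Finset.sum_powerset_insert hx]
    have h1 : ∑ A ∈ F.powerset, (∑ s ∈ insert x F, sg A s * a s) ^ 4
        = ∑ A ∈ F.powerset, (∑ s ∈ F, sg A s * a s - a x) ^ 4 := by
      apply Finset.sum_congr rfl
      intro A hA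
      rw [sum_sg_insert_not hx a (Finset.mem_powerset.1 hA)]
    have hsq : a x ^ 2 ≤ 1 := by
      have := ha x; rw [← sq_abs]; nlinarith [abs_nonneg (a x)]
    have h2 := moment2 a ha F
    simp_rw [sum_sg_insert hx a]
    rw [h1, ← Finset.sum_add_distrib]
    have h20 : 0 ≤ ∑ A ∈ F.powerset, (∑ s ∈ F, sg A s * a s) ^ 2 :=
      Finset.sum_nonneg fun _ _ => sq_nonneg _
    calc _ = ∑ A ∈ F.powerset, (2 * (∑ s ∈ F, sg A s * a s) ^ 4
              + 12 * a x ^ 2 * (∑ s ∈ F, sg A s * a s) ^ 2 + 2 * (a x ^ 2) ^ 2) := by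
          apply Finset.sum_congr rfl; intros; ring
      _ = 2 * ∑ A ∈ F.powerset, (∑ s ∈ F, sg A s * a s) ^ 4
            + 12 * a x ^ 2 * ∑ A ∈ F.powerset, (∑ s ∈ F, sg A s * a s) ^ 2
            + 2 ^ F.card * (2 * (a x ^ 2) ^ 2) := by
          rw [Finset.sum_add_distrib, Finset.sum_add_distrib, ← Finset.mul_sum, ← Finset.mul_sum]; simp
      _ ≤ 2 * (3 * F.card ^ 2 * 2 ^ F.card) + 12 * 1 * (F.card * 2 ^ F.card)
            + 2 ^ F.card * (2 * 1 ^ 2) := by gcongr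
      _ ≤ _ := by
        rw [Finset.card_insert_of_notMem hx]; push_cast
        have : (0:ℝ) < 2 ^ F.card := by positivity
        rw [pow_succ (2:ℝ)]
        nlinarith

/-- cost function -/
noncomputable def cost (M : ℝ) (b : ℤ) : ℝ := if b = 0 then 16 / M ^ 2 else M * (b : ℝ) ^ 4

lemma cost_le (M : ℝ) (hM : 0 < M) (b : ℤ) : cost M b ≤ 16 / M ^ 2 + M * (b : ℝ) ^ 4 := by
  unfold cost
  split_ifs with h
  · simp [h]
  · have : 0 ≤ 16 / M ^ 2 := by positivity
    linarith

lemma cost_sum_Icc (M : ℝ) (hM : 4 ≤ M) (N : ℕ) :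
    ∑ b ∈ Finset.Icc (-(N : ℤ)) N, Real.exp (-cost M b) ≤ 1 - 8 / M ^ 2 * (1 / 2) ^ N := by
  have hM2 : 16 ≤ M ^ 2 := by nlinarith
  set δ := 8 / M ^ 2 with hδ
  have hδ0 : 0 < δ := by positivity
  have hδ1 : δ ≤ 1 / 2 := by rw [hδ, div_le_iff₀ (by positivity)]; linarith
  have hx : Real.exp (-M) ≤ δ / 4 := by
    have h := Real.quadratic_le_exp_of_nonneg (show 0 ≤ M by linarith)
    rw [Real.exp_neg]
    calc (Real.exp M)⁻¹ ≤ (M ^ 2 / 2)⁻¹ := by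
          apply inv_anti₀ (by positivity); linarith
      _ = δ / 4 := by rw [hδ]; field_simp; norm_num
  induction N with
  | zero =>
    simp only [CharP.cast_eq_zero, neg_zero, Finset.Icc_self, Finset.sum_singleton, pow_zero, mul_one]
    have : cost M 0 = 2 * δ := by simp [cost, hδ]; ring
    rw [this, Real.exp_neg]
    have h := Real.add_one_le_exp (2 * δ)
    rw [inv_le_comm₀ (Real.exp_pos _) (by linarith)]
    refine le_trans ?_ h
    rw [inv_le_iff_one_le_mul₀ (by linarith)]
    nlinarith
  | succ N ih =>
    have hI : Finset.Icc (-((N + 1 : ℕ) : ℤ)) ((N + 1 : ℕ) : ℤ)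
        = insert (-((N + 1 : ℕ) : ℤ)) (insert ((N + 1 : ℕ) : ℤ) (Finset.Icc (-(N : ℤ)) N)) := by
      ext b; simp only [Finset.mem_Icc, Finset.mem_insert]; omega
    rw [hI, Finset.sum_insert (by simp; omega), Finset.sum_insert (by simp)]
    have hb : M * (N + 1) ≤ M * ((N : ℝ) + 1) ^ 4 := by
      gcongr
      have : (1:ℝ) ≤ N + 1 := by linarith [Nat.cast_nonneg (α := ℝ) N]
      exact le_self_pow₀ this (by norm_num)
    have e : Real.exp (-(M * ((N : ℝ) + 1) ^ 4)) ≤ δ / 4 * (1 / 2) ^ N := by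
      calc _ ≤ Real.exp (-(M * (N + 1))) := by apply Real.exp_le_exp.2; linarith
        _ = Real.exp (-M) ^ (N + 1) := by rw [← Real.exp_nat_mul]; push_cast; ring_nf
        _ = Real.exp (-M) * Real.exp (-M) ^ N := by ring
        _ ≤ δ / 4 * (1 / 2) ^ N := by gcongr; linarith
    have c1 : cost M (((N + 1 : ℕ) : ℤ)) = M * ((N : ℝ) + 1) ^ 4 := by
      unfold cost; rw [if_neg (by omega)]; push_cast; rfl
    have c2 : cost M (-((N + 1 : ℕ) : ℤ)) = M * ((N : ℝ) + 1) ^ 4 := by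
      unfold cost; rw [if_neg (by omega)]; push_cast; ring
    rw [c1, c2, pow_succ (1 / 2 : ℝ)]
    linarith

lemma cost_sum (M : ℝ) (hM : 4 ≤ M) (B : Finset ℤ) :
    ∑ b ∈ B, Real.exp (-cost M b) ≤ 1 := by
  set N := B.sup Int.natAbs
  have hB : B ⊆ Finset.Icc (-(N : ℤ)) N := by
    intro b hb
    have : b.natAbs ≤ N := Finset.le_sup (f := Int.natAbs) hb
    simp only [Finset.mem_Icc]; omega
  calc _ ≤ ∑ b ∈ Finset.Icc (-(N : ℤ)) N, Real.exp (-cost M b) :=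
        Finset.sum_le_sum_of_subset_of_nonneg hB fun _ _ _ => (Real.exp_pos _).le
    _ ≤ _ := cost_sum_Icc M hM N
    _ ≤ 1 := by
      have : 0 ≤ 8 / M ^ 2 * (1 / 2 : ℝ) ^ N := by positivity
      linarith

/-- entropy-style pigeonhole -/
lemma exists_cell {n : ℕ} (P : Finset (Finset ℕ)) (β : Finset ℕ → Fin n → ℤ)
    (M : ℝ) (hM : 4 ≤ M) (m : ℝ) (hm : ∑ A ∈ P, ∑ i, cost M (β A i) ≤ P.card * m) (hP : P.Nonempty) :
    ∃ f : Fin n → ℤ, P.card * Real.exp (-m) ≤ ((P.filter (fun A => β A = f)).card : ℝ) := by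
  by_contra hcon
  push Not at hcon
  set g : Finset ℕ → ℝ := fun A => ∑ i, cost M (β A i) with hg
  have h1 : P.card * Real.exp (-m) ≤ ∑ A ∈ P, Real.exp (-g A) := by
    have : ∀ A ∈ P, Real.exp (-m) * (1 - (g A - m)) ≤ Real.exp (-g A) := by
      intro A _
      have h := Real.add_one_le_exp (m - g A)
      calc _ ≤ Real.exp (-m) * Real.exp (m - g A) := by gcongr; linarith
        _ = _ := by rw [← Real.exp_add]; ring_nf
    refine le_trans ?_ (Finset.sum_le_sum this)
    rw [← Finset.mul_sum, mul_comm]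
    gcongr
    rw [Finset.sum_sub_distrib, Finset.sum_sub_distrib]
    simp only [Finset.sum_const, nsmul_eq_mul, mul_one]
    linarith
  have h2 : ∑ A ∈ P, Real.exp (-g A)
      = ∑ f ∈ P.image β, ((P.filter (fun A => β A = f)).card : ℝ) * ∏ i, Real.exp (-cost M (f i)) := by
    rw [← Finset.sum_fiberwise_of_maps_to (fun A hA => Finset.mem_image_of_mem β hA)]
    apply Finset.sum_congr rfl
    intro f _
    rw [Finset.sum_congr rfl (g := fun _ => ∏ i, Real.exp (-cost M (f i)))]
    · simp
    · intro A hA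
      rw [Finset.mem_filter] at hA
      simp only [hg]
      rw [← Finset.sum_neg_distrib, Real.exp_sum, hA.2]
  have h3 : ∑ f ∈ P.image β, ∏ i, Real.exp (-cost M (f i)) ≤ 1 := by
    set B : Finset ℤ := P.biUnion (fun A => Finset.univ.image (β A))
    calc _ ≤ ∑ f ∈ Fintype.piFinset (fun _ : Fin n => B), ∏ i, Real.exp (-cost M (f i)) := by
          apply Finset.sum_le_sum_of_subset_of_nonneg
          · intro f hf
            rw [Finset.mem_image] at hf
            obtain ⟨A, hA, rfl⟩ := hf
            rw [Fintype.mem_piFinset]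
            intro i
            exact Finset.mem_biUnion.2 ⟨A, hA, Finset.mem_image_of_mem _ (Finset.mem_univ _)⟩
          · intros; exact Finset.prod_nonneg fun _ _ => (Real.exp_pos _).le
      _ = ∏ i : Fin n, ∑ b ∈ B, Real.exp (-cost M b) := by
          rw [Finset.prod_univ_sum]
      _ ≤ 1 := Finset.prod_le_one (fun _ _ => Finset.sum_nonneg fun _ _ => (Real.exp_pos _).le)
          (fun _ _ => cost_sum M hM B)
  have h4 : ∑ A ∈ P, Real.exp (-g A) < P.card * Real.exp (-m) := by
    rw [h2]
    calc _ < ∑ f ∈ P.image β, (P.card * Real.exp (-m)) * ∏ i, Real.exp (-cost M (f i)) := by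
          apply Finset.sum_lt_sum_of_nonempty (hP.image _)
          intro f _
          exact mul_lt_mul_of_pos_right (hcon f) (Finset.prod_pos fun _ _ => Real.exp_pos _)
      _ ≤ P.card * Real.exp (-m) := by
          rw [← Finset.mul_sum]
          exact mul_le_of_le_one_right (by positivity) h3
  linarith

/-- Hamming ball bound -/
lemma far_pair (F : Finset ℕ) (hF : F.Nonempty) (Q : Finset (Finset ℕ)) (hQ : Q ⊆ F.powerset)
    (hc : (2 : ℝ) ^ F.card * Real.exp (-(F.card / 4)) ≤ Q.card) :
    ∃ A ∈ Q, ∃ B ∈ Q, F.card < 16 * (symmDiff A B).card := by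
  have hk : 0 < F.card := hF.card_pos
  have hlow : ((3 : ℝ) / 2) ^ F.card ≤ Q.card := by
    refine le_trans ?_ hc
    have : Real.exp (-((F.card : ℝ) / 4)) = Real.exp (-(1 / 4)) ^ F.card := by
      rw [← Real.exp_nat_mul]; ring_nf
    rw [this, ← mul_pow]
    gcongr
    have := Real.add_one_le_exp (-(1 / 4 : ℝ))
    linarith
  have hQn : Q.Nonempty := by
    rw [← Finset.card_pos]
    have : (0 : ℝ) < Q.card := lt_of_lt_of_le (by positivity) hlow
    exact_mod_cast this
  obtain ⟨A, hA⟩ := hQn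
  refine ⟨A, hA, ?_⟩
  by_contra! hcon
  have h1 : ∀ B ∈ Q, (1 : ℝ) ≤ (9 / 8) ^ F.card * (1 / 4) ^ (symmDiff A B).card := by
    intro B hB
    have h := hcon B hB
    calc (1 : ℝ) ≤ ((9 / 8) ^ 16 * (1 / 4)) ^ (symmDiff A B).card := one_le_pow₀ (by norm_num)
      _ = (9 / 8) ^ (16 * (symmDiff A B).card) * (1 / 4) ^ (symmDiff A B).card := by
        rw [mul_pow, ← pow_mul]
      _ ≤ _ := by gcongr; norm_num
  have h2 : (Q.card : ℝ) ≤ (9 / 8) ^ F.card * (5 / 4) ^ F.card := by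
    calc (Q.card : ℝ) = ∑ B ∈ Q, (1 : ℝ) := by simp
      _ ≤ ∑ B ∈ Q, (9 / 8 : ℝ) ^ F.card * (1 / 4) ^ (symmDiff A B).card := Finset.sum_le_sum h1
      _ = (9 / 8 : ℝ) ^ F.card * ∑ B ∈ Q, (1 / 4 : ℝ) ^ (symmDiff A B).card := by rw [Finset.mul_sum]
      _ = (9 / 8 : ℝ) ^ F.card * ∑ D ∈ Q.image (fun B => symmDiff A B), (1 / 4 : ℝ) ^ D.card := by
        rw [Finset.sum_image]
        intro B _ B' _ h
        exact symmDiff_right_injective A h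
      _ ≤ (9 / 8 : ℝ) ^ F.card * ∑ D ∈ F.powerset, (1 / 4 : ℝ) ^ D.card := by
        gcongr
        intro D hD
        rw [Finset.mem_image] at hD
        obtain ⟨B, hB, rfl⟩ := hD
        have hA' := Finset.mem_powerset.1 (hQ hA)
        have hB' := Finset.mem_powerset.1 (hQ hB)
        rw [Finset.mem_powerset]
        intro s hs
        rw [Finset.mem_symmDiff] at hs
        rcases hs with h | h
        · exact hA' h.1
        · exact hB' h.1
      _ = _ := by
        congr 1
        have := Finset.prod_one_add (f := fun _ : ℕ => (1 / 4 : ℝ)) F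
        simp only [Finset.prod_const] at this
        rw [← this]; norm_num
  have h3 : (9 / 8 : ℝ) ^ F.card * (5 / 4) ^ F.card < (3 / 2) ^ F.card := by
    rw [← mul_pow]
    exact pow_lt_pow_left₀ (by norm_num) (by norm_num) hk.ne'
  linarith

/-- scale `(n^3 k)^(1/8)` -/
noncomputable def q (n k : ℕ) : ℝ := ((n : ℝ) ^ 3 * k) ^ ((1 : ℝ) / 8)

lemma q_nonneg (n k : ℕ) : 0 ≤ q n k := by unfold q; positivity

lemma q_pow (n k : ℕ) : q n k ^ 8 = (n : ℝ) ^ 3 * k := by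
  unfold q
  rw [← Real.rpow_natCast, ← Real.rpow_mul (by positivity)]
  norm_num

lemma q_le_sqrt {n k : ℕ} (h : k ≤ n) : q n k ≤ Real.sqrt n := by
  apply le_of_pow_le_pow_left₀ (n := 8) (by norm_num) (Real.sqrt_nonneg _)
  rw [q_pow]
  have : Real.sqrt n ^ 8 = (n : ℝ) ^ 3 * n := by
    have h := Real.sq_sqrt (Nat.cast_nonneg (α := ℝ) n)
    calc _ = (Real.sqrt n ^ 2) ^ 4 := by ring
      _ = _ := by rw [h]; ring
  rw [this]; gcongr

lemma q_shrink {n k k' : ℕ} (h : 16 * k' ≤ 15 * k) : q n k' ≤ 127 / 128 * q n k := by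
  apply le_of_pow_le_pow_left₀ (n := 8) (by norm_num) (by have := q_nonneg n k; positivity)
  rw [mul_pow, q_pow, q_pow]
  have h' : (16 : ℝ) * k' ≤ 15 * k := by exact_mod_cast h
  have : (k' : ℝ) ≤ (127 / 128) ^ 8 * k := by
    have : (0 : ℝ) ≤ k := by positivity
    norm_num; linarith
  calc (n : ℝ) ^ 3 * k' ≤ n ^ 3 * ((127 / 128) ^ 8 * k) := by gcongr
    _ = _ := by ring

lemma round_bound (z : ℝ) : ((round z : ℤ) : ℝ) ^ 4 ≤ 16 * z ^ 4 := by
  have h := abs_sub_round z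
  have : |((round z : ℤ) : ℝ)| ≤ 2 * |z| := by
    by_cases h0 : round z = 0
    · rw [h0]; simp
    · have h1 : (1 : ℝ) ≤ |((round z : ℤ) : ℝ)| := by exact_mod_cast Int.one_le_abs h0
      have h2 : |((round z : ℤ) : ℝ)| ≤ |z| + |z - round z| := by
        have := abs_sub_abs_le_abs_sub ((round z : ℤ) : ℝ) z
        rw [abs_sub_comm] at this; linarith
      linarith
  calc ((round z : ℤ) : ℝ) ^ 4 = |((round z : ℤ) : ℝ)| ^ 4 := by rw [Even.pow_abs (by decide)]
    _ ≤ (2 * |z|) ^ 4 := by gcongr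
    _ = 16 * z ^ 4 := by rw [mul_pow, Even.pow_abs (by decide)]; norm_num

lemma partial_coloring {n : ℕ} (F : Finset ℕ) (hF : F.Nonempty) (hn : F.card ≤ n)
    (a : ℕ → Fin n → ℝ) (ha : ∀ s c, |a s c| ≤ 1) :
    ∃ p : ℕ → ℤ, (∀ s, p s = 0 ∨ p s = 1 ∨ p s = -1) ∧
      16 * (F.filter (fun s => p s = 0)).card ≤ 15 * F.card ∧
      ∀ c, |∑ s ∈ F, (p s : ℝ) * a s c| ≤ 16 * q n F.card := by
  have hk : 0 < F.card := hF.card_pos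
  set k := F.card with hkdef
  have hk' : (0 : ℝ) < k := by exact_mod_cast hk
  have hn' : (0 : ℝ) < n := by exact_mod_cast lt_of_lt_of_le hk hn
  have hkn : (k : ℝ) ≤ n := by exact_mod_cast hn
  set M := Real.sqrt (128 * n / k) with hMdef
  have hM2 : M ^ 2 = 128 * n / k := Real.sq_sqrt (by positivity)
  have hM : 4 ≤ M := by
    apply Real.le_sqrt_of_sq_le
    rw [le_div_iff₀ hk']; nlinarith
  set w := 16 * q n k with hw
  have hq8 := q_pow n k
  have hq0 : 0 < q n k := by unfold q; positivity
  have hwpos : 0 < w := by positivity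
  have hw4 : 384 * n * M * k ≤ w ^ 4 := by
    apply le_of_pow_le_pow_left₀ (n := 2) (by norm_num) (by positivity)
    calc (384 * n * M * k) ^ 2 = 384 ^ 2 * (n : ℝ) ^ 2 * (k : ℝ) ^ 2 * M ^ 2 := by ring
      _ = 384 ^ 2 * 128 * ((n : ℝ) ^ 3 * (k : ℝ)) := by rw [hM2]; field_simp
      _ ≤ 16 ^ 8 * ((n : ℝ) ^ 3 * (k : ℝ)) := by gcongr; norm_num
      _ = (w ^ 4) ^ 2 := by rw [← hq8, hw]; ring
  set β : Finset ℕ → Fin n → ℤ := fun A i => round ((∑ s ∈ F, sg A s * a s i) / w) with hβ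
  have hcost : ∑ A ∈ F.powerset, ∑ i, cost M (β A i) ≤ F.powerset.card * ((k : ℝ) / 4) := by
    rw [Finset.sum_comm]
    have hi : ∀ i ∈ (Finset.univ : Finset (Fin n)), ∑ A ∈ F.powerset, cost M (β A i)
        ≤ 2 ^ k * (16 / M ^ 2 + 48 * M * k ^ 2 / w ^ 4) := by
      intro i _
      calc _ ≤ ∑ A ∈ F.powerset, (16 / M ^ 2 + M * (16 * ((∑ s ∈ F, sg A s * a s i) / w) ^ 4)) := by
            apply Finset.sum_le_sum
            intro A _
            refine (cost_le M (by linarith) _).trans ?_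
            gcongr
            exact round_bound _
        _ = 2 ^ k * (16 / M ^ 2) + 16 * M / w ^ 4 * ∑ A ∈ F.powerset, (∑ s ∈ F, sg A s * a s i) ^ 4 := by
            rw [Finset.sum_add_distrib, Finset.mul_sum]
            congr 1
            · simp [hkdef]
            · apply Finset.sum_congr rfl; intros; rw [div_pow]; ring
        _ ≤ 2 ^ k * (16 / M ^ 2) + 16 * M / w ^ 4 * (3 * k ^ 2 * 2 ^ k) := by
            gcongr
            exact moment4 (fun s => a s i) (fun s => ha s i) F
        _ = _ := by ring
    refine (Finset.sum_le_sum hi).trans ?_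
    rw [Finset.card_powerset, ← hkdef]
    simp only [Finset.sum_const, Finset.card_univ, Fintype.card_fin, nsmul_eq_mul]
    push_cast
    have e1 : n * (16 / M ^ 2) = (k : ℝ) / 8 := by rw [hM2]; field_simp; norm_num
    have e2 : n * (48 * M * k ^ 2 / w ^ 4) ≤ (k : ℝ) / 8 := by
      rw [← mul_div_assoc, div_le_iff₀ (by positivity)]
      nlinarith
    calc (n : ℝ) * (2 ^ k * (16 / M ^ 2 + 48 * M * k ^ 2 / w ^ 4))
        = (2 : ℝ) ^ k * ((n : ℝ) * (16 / M ^ 2) + (n : ℝ) * (48 * M * k ^ 2 / w ^ 4)) := by ring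
      _ ≤ (2 : ℝ) ^ k * ((k : ℝ) / 8 + (k : ℝ) / 8) := by gcongr; exact e1.le
      _ = _ := by ring
  obtain ⟨f, hf⟩ := exists_cell F.powerset β M hM _ hcost ⟨∅, by simp⟩
  rw [Finset.card_powerset] at hf
  push_cast at hf
  obtain ⟨A, hA, B, hB, hAB⟩ := far_pair F hF _ (Finset.filter_subset _ _) hf
  rw [Finset.mem_filter, Finset.mem_powerset] at hA hB
  refine ⟨fun s => if s ∈ A then (if s ∈ B then 0 else 1) else (if s ∈ B then -1 else 0), ?_, ?_, ?_⟩
  · intro s; dsimp only; split_ifs <;> simp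
  · have hsub : symmDiff A B ⊆ F := by
      intro s hs
      rw [Finset.mem_symmDiff] at hs
      rcases hs with h | h
      · exact hA.1 h.1
      · exact hB.1 h.1
    have heq : F.filter (fun s => (if s ∈ A then (if s ∈ B then 0 else 1) else (if s ∈ B then -1 else 0) : ℤ) = 0)
        ⊆ F \ symmDiff A B := by
      intro s hs
      rw [Finset.mem_filter] at hs
      rw [Finset.mem_sdiff, Finset.mem_symmDiff]
      refine ⟨hs.1, ?_⟩
      have := hs.2
      split_ifs at this <;> simp_all
    have h1 := Finset.card_le_card heq
    have h0 := Finset.card_le_card hsub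
    beta_reduce
    rw [Finset.card_sdiff_of_subset hsub] at h1
    omega
  · intro c
    have e : ∑ s ∈ F, (((if s ∈ A then (if s ∈ B then 0 else 1) else (if s ∈ B then -1 else 0) : ℤ)) : ℝ) * a s c
        = ((∑ s ∈ F, sg A s * a s c) - ∑ s ∈ F, sg B s * a s c) / 2 := by
      rw [← Finset.sum_sub_distrib, Finset.sum_div]
      apply Finset.sum_congr rfl
      intro s _
      unfold sg
      split_ifs <;> push_cast <;> ring
    rw [e]
    have hr : round ((∑ s ∈ F, sg A s * a s c) / w) = round ((∑ s ∈ F, sg B s * a s c) / w) :=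
      congrFun (hA.2.trans hB.2.symm) c
    have h1 := abs_sub_round ((∑ s ∈ F, sg A s * a s c) / w)
    have h2 := abs_sub_round ((∑ s ∈ F, sg B s * a s c) / w)
    rw [hr] at h1
    rw [abs_le] at h1 h2
    have h3 : |(∑ s ∈ F, sg A s * a s c) / w - (∑ s ∈ F, sg B s * a s c) / w| ≤ 1 := by
      rw [abs_le]; constructor <;> linarith [h1.1, h1.2, h2.1, h2.2]
    rw [← sub_div, abs_div, abs_of_pos hwpos, div_le_one hwpos] at h3
    rw [abs_div, abs_two]
    linarith

lemma spencer {n : ℕ} (a : ℕ → Fin n → ℝ) (ha : ∀ s c, |a s c| ≤ 1) :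
    ∀ (k : ℕ) (F : Finset ℕ), F.card = k → F.card ≤ n →
    ∃ χ : ℕ → ℤ, (∀ s, χ s = 1 ∨ χ s = -1) ∧
      ∀ c, |∑ s ∈ F, (χ s : ℝ) * a s c| ≤ 2048 * q n F.card := by
  intro k
  induction k using Nat.strong_induction_on with
  | _ k ih =>
    intro F hk hn
    rcases F.eq_empty_or_nonempty with rfl | hF
    · refine ⟨fun _ => 1, by simp, ?_⟩
      intro c
      have := q_nonneg n (∅ : Finset ℕ).card
      simp only [Finset.sum_empty, abs_zero]
      positivity
    · obtain ⟨p, hp, hcard, hdisc⟩ := partial_coloring F hF hn a ha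
      set G := F.filter (fun s => p s = 0) with hG
      have hpos := hF.card_pos
      obtain ⟨χ, hχ, hd⟩ := ih G.card (by omega) G rfl (by omega)
      refine ⟨fun s => if p s = 0 then χ s else p s, ?_, ?_⟩
      · intro s
        dsimp only
        split_ifs with h
        · exact hχ s
        · have := hp s; tauto
      · intro c
        have e : ∑ s ∈ F, (((if p s = 0 then χ s else p s : ℤ)) : ℝ) * a s c
            = ∑ s ∈ F, (p s : ℝ) * a s c + ∑ s ∈ G, (χ s : ℝ) * a s c := by
          rw [hG, Finset.sum_filter, ← Finset.sum_add_distrib]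
          apply Finset.sum_congr rfl
          intro s _
          split_ifs with h <;> simp [h]
        rw [e]
        refine (abs_add_le _ _).trans ?_
        have h1 := hdisc c
        have h2 := hd c
        have h3 := q_shrink (n := n) hcard
        linarith

lemma spencer' {n : ℕ} (a : ℕ → Fin n → ℝ) (ha : ∀ s c, |a s c| ≤ 1) (F : Finset ℕ) (hn : F.card ≤ n) :
    ∃ χ : ℕ → ℤ, (∀ s, χ s = 1 ∨ χ s = -1) ∧
      ∀ c, |∑ s ∈ F, (χ s : ℝ) * a s c| ≤ 2048 * Real.sqrt n := by
  obtain ⟨χ, h1, h2⟩ := spencer a ha _ F rfl hn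
  exact ⟨χ, h1, fun c => (h2 c).trans (by have := q_le_sqrt hn; linarith)⟩

lemma dyadic {n : ℕ} (a : ℕ → Fin n → ℝ) (ha : ∀ s c, |a s c| ≤ 1) (F : Finset ℕ) (hn : F.card ≤ n)
    (m : ℕ) : ∀ j : ℕ → ℤ, (∀ s, |j s| ≤ 2 ^ m) →
    ∃ χ : ℕ → ℤ, (∀ s, χ s = 1 ∨ χ s = -1) ∧
      ∀ c, |∑ s ∈ F, ((χ s : ℝ) - j s / 2 ^ m) * a s c| ≤ 2048 * Real.sqrt n * (2 - (1 / 2) ^ m) := by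
  induction m with
  | zero =>
    intro j hj
    obtain ⟨χ, h1, h2⟩ := spencer' a ha (F.filter (fun s => j s = 0))
      ((Finset.card_le_card (Finset.filter_subset _ _)).trans hn)
    refine ⟨fun s => if j s = 0 then χ s else j s, ?_, ?_⟩
    · intro s
      have := hj s
      rw [pow_zero, abs_le] at this
      dsimp only
      split_ifs with h
      · exact h1 s
      · omega
    · intro c
      have := h2 c
      rw [Finset.sum_filter] at this
      have e : ∑ s ∈ F, (((if j s = 0 then χ s else j s : ℤ) : ℝ) - j s / 2 ^ 0) * a s c
          = ∑ s ∈ F, if j s = 0 then (χ s : ℝ) * a s c else 0 := by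
        apply Finset.sum_congr rfl
        intro s _
        split_ifs with h <;> simp [h]
      rw [e]
      refine this.trans (le_of_eq ?_)
      norm_num
  | succ m ih =>
    intro j hj
    obtain ⟨χ, h1, h2⟩ := spencer' a ha (F.filter (fun s => ¬ Even (j s)))
      ((Finset.card_le_card (Finset.filter_subset _ _)).trans hn)
    have hex : ∀ s, ∃ i : ℤ, |i| ≤ 2 ^ m ∧ 2 * i = j s + if ¬ Even (j s) then χ s else 0 := by
      intro s
      have hs := hj s
      rw [pow_succ, abs_le] at hs
      by_cases h : Even (j s)
      · obtain ⟨i, hi⟩ := h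
        refine ⟨i, ?_, ?_⟩
        · rw [abs_le]; omega
        · have h : Even (j s) := ⟨i, hi⟩
          simp [h]; omega
      · have ho := h
        rw [Int.not_even_iff_odd] at ho
        obtain ⟨i, hi⟩ := ho
        simp only [h, not_false_eq_true, if_true]
        rcases h1 s with h' | h'
        · exact ⟨i + 1, by rw [abs_le]; omega, by omega⟩
        · exact ⟨i, by rw [abs_le]; omega, by omega⟩
    choose i hi1 hi2 using hex
    obtain ⟨χ', h3, h4⟩ := ih i hi1
    refine ⟨χ', h3, ?_⟩
    intro c
    have e : ∑ s ∈ F, ((χ' s : ℝ) - j s / 2 ^ (m + 1)) * a s c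
        = ∑ s ∈ F, ((χ' s : ℝ) - i s / 2 ^ m) * a s c
          + (1 / 2) ^ (m + 1) * ∑ s ∈ F.filter (fun s => ¬ Even (j s)), (χ s : ℝ) * a s c := by
      rw [Finset.sum_filter, Finset.mul_sum, ← Finset.sum_add_distrib]
      apply Finset.sum_congr rfl
      intro s _
      have hh : (2 : ℝ) * i s = j s + if ¬ Even (j s) then (χ s : ℝ) else 0 := by
        have := hi2 s
        have h := congrArg (Int.cast : ℤ → ℝ) this
        push_cast at h
        rw [h]
      have hj' : (j s : ℝ) = 2 * i s - if ¬ Even (j s) then (χ s : ℝ) else 0 := by linarith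
      rw [hj']
      by_cases h : Even (j s)
      · simp only [h, not_true_eq_false, if_false]
        field_simp
        ring
      · simp only [h, not_false_eq_true, if_true]
        rw [div_pow, one_pow]
        field_simp
        ring
    rw [e]
    refine (abs_add_le _ _).trans ?_
    rw [abs_mul, abs_of_pos (a := (1 / 2 : ℝ) ^ (m + 1)) (by positivity)]
    have h5 := h4 c
    have h6 : (1 / 2 : ℝ) ^ (m + 1) * |∑ s ∈ F.filter (fun s => ¬ Even (j s)), (χ s : ℝ) * a s c|
        ≤ (1 / 2) ^ (m + 1) * (2048 * Real.sqrt n) := by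
      gcongr; exact h2 c
    have h7 : (1 / 2 : ℝ) ^ m = 2 * (1 / 2) ^ (m + 1) := by rw [pow_succ]; ring
    rw [h7] at h5
    nlinarith

lemma lindisc {n : ℕ} (a : ℕ → Fin n → ℝ) (ha : ∀ s c, |a s c| ≤ 1) (F : Finset ℕ) (hn : F.card ≤ n)
    (x : ℕ → ℝ) (hx : ∀ s, |x s| ≤ 1) :
    ∃ χ : ℕ → ℤ, (∀ s, χ s = 1 ∨ χ s = -1) ∧
      ∀ c, |∑ s ∈ F, ((χ s : ℝ) - x s) * a s c| ≤ 4097 * Real.sqrt n := by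
  have h2 : (0 : ℝ) < 2 ^ n := by positivity
  obtain ⟨χ, h1, hd⟩ := dyadic a ha F hn n (fun s => ⌊x s * 2 ^ n⌋) (by
    intro s
    have := abs_le.1 (hx s)
    rw [abs_le]
    constructor
    · rw [Int.le_floor]; push_cast; nlinarith
    · have h : ((⌊x s * 2 ^ n⌋ : ℤ) : ℝ) ≤ ((2 ^ n : ℤ) : ℝ) := by
        refine (Int.floor_le _).trans ?_
        push_cast; nlinarith
      exact_mod_cast h)
  refine ⟨χ, h1, ?_⟩
  intro c
  have hn1 : (1 : ℝ) ≤ Real.sqrt n := by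
    rw [Real.one_le_sqrt]
    exact_mod_cast Nat.one_le_of_lt c.2
  have e : ∑ s ∈ F, ((χ s : ℝ) - x s) * a s c
      = ∑ s ∈ F, ((χ s : ℝ) - (⌊x s * 2 ^ n⌋ : ℤ) / 2 ^ n) * a s c
        + ∑ s ∈ F, ((⌊x s * 2 ^ n⌋ : ℤ) / 2 ^ n - x s) * a s c := by
    rw [← Finset.sum_add_distrib]
    apply Finset.sum_congr rfl; intros; ring
  have h3 : |∑ s ∈ F, (((⌊x s * 2 ^ n⌋ : ℤ) : ℝ) / 2 ^ n - x s) * a s c| ≤ 1 := by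
    calc _ ≤ ∑ s ∈ F, |(((⌊x s * 2 ^ n⌋ : ℤ) : ℝ) / 2 ^ n - x s) * a s c| := Finset.abs_sum_le_sum_abs _ _
      _ ≤ ∑ s ∈ F, 1 / 2 ^ n := by
        apply Finset.sum_le_sum
        intro s _
        rw [abs_mul]
        have h4 : |((⌊x s * 2 ^ n⌋ : ℤ) : ℝ) / 2 ^ n - x s| ≤ 1 / 2 ^ n := by
          have e2 : ((⌊x s * 2 ^ n⌋ : ℤ) : ℝ) / 2 ^ n - x s = ((⌊x s * 2 ^ n⌋ : ℤ) - x s * 2 ^ n) / 2 ^ n := by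
            field_simp
          rw [e2, abs_div, abs_of_pos h2]
          gcongr
          rw [abs_le]
          constructor <;> linarith [Int.floor_le (x s * 2 ^ n), Int.lt_floor_add_one (x s * 2 ^ n)]
        calc _ ≤ 1 / 2 ^ n * (1 : ℝ) := by gcongr; exact ha s c
          _ = _ := mul_one _
      _ = F.card / 2 ^ n := by simp [div_eq_mul_inv]
      _ ≤ 1 := by
        rw [div_le_one h2]
        have : F.card ≤ 2 ^ n := hn.trans Nat.lt_two_pow_self.le
        exact_mod_cast this
  rw [e]
  refine (abs_add_le _ _).trans ?_
  have h5 := hd c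
  have h6 : (0 : ℝ) < (1 / 2) ^ n := by positivity
  nlinarith

lemma bg_step {n : ℕ} (I : Finset ℕ) (b : ℕ → Fin n → ℝ) (x : ℕ → ℝ) (hx : ∀ s, |x s| ≤ 1)
    (hc : n < (I.filter (fun s => |x s| < 1)).card) :
    ∃ z : ℕ → ℝ, (∀ s, |z s| ≤ 1) ∧ (∀ c, ∑ s ∈ I, z s * b s c = ∑ s ∈ I, x s * b s c) ∧
      (∀ s, ¬ (s ∈ I ∧ |x s| < 1) → z s = x s) ∧
      (I.filter (fun s => |z s| < 1)).card < (I.filter (fun s => |x s| < 1)).card := by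
  classical
  set F := I.filter (fun s => |x s| < 1) with hF
  have hdep : ¬ LinearIndependent ℝ (fun s : F => b s) := by
    intro h
    have := h.fintype_card_le_finrank
    simp at this
    omega
  obtain ⟨g', hg', i', hi'⟩ := Fintype.not_linearIndependent_iff.1 hdep
  set g : ℕ → ℝ := fun s => if h : s ∈ F then g' ⟨s, h⟩ else 0 with hg
  have hgF : ∀ s, s ∉ F → g s = 0 := fun s hs => by simp [hg, hs]
  have hgsum : ∀ c, ∑ s ∈ I, g s * b s c = 0 := by
    intro c
    have h1 : ∑ s ∈ I, g s * b s c = ∑ s ∈ F, g s * b s c := by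
      symm
      apply Finset.sum_subset (Finset.filter_subset _ _)
      intro s _ hs
      rw [hgF s hs, zero_mul]
    rw [h1, ← Finset.sum_coe_sort F]
    have h2 := congrFun hg' c
    simp only [Finset.sum_apply, Pi.smul_apply, smul_eq_mul, Pi.zero_apply] at h2
    rw [← h2]
    apply Finset.sum_congr rfl
    intro s _
    simp [hg]
  have hGne : (F.filter (fun s => g s ≠ 0)).Nonempty := by
    refine ⟨i', ?_⟩
    rw [Finset.mem_filter]
    exact ⟨i'.2, by simpa [hg] using hi'⟩
  obtain ⟨s0, hs0, hmin⟩ := Finset.exists_min_image _ (fun s => (|g s| - x s * g s) / (g s) ^ 2) hGne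
  rw [Finset.mem_filter] at hs0
  set τ := (|g s0| - x s0 * g s0) / (g s0) ^ 2 with hτ
  have hτ0 : 0 ≤ τ := by
    apply div_nonneg _ (sq_nonneg _)
    have h1 : |x s0 * g s0| ≤ |g s0| := by
      rw [abs_mul]; exact mul_le_of_le_one_left (abs_nonneg _) (hx s0)
    linarith [le_abs_self (x s0 * g s0)]
  have hz1 : ∀ s, |x s + τ * g s| ≤ 1 := by
    intro s
    by_cases hsF : s ∈ F ∧ g s ≠ 0
    · have h1 := hmin s (Finset.mem_filter.2 hsF)
      have h2 := abs_le.1 (hx s)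
      rw [le_div_iff₀ (by have := hsF.2; positivity)] at h1
      rcases lt_or_gt_of_ne hsF.2 with h | h
      · rw [abs_of_neg h] at h1
        have h3 : -1 - x s ≤ τ * g s := by
          by_contra hcon
          push Not at hcon
          nlinarith
        rw [abs_le]
        constructor
        · linarith
        · nlinarith
      · rw [abs_of_pos h] at h1
        have h3 : τ * g s ≤ 1 - x s := by
          by_contra hcon
          push Not at hcon
          nlinarith
        rw [abs_le]
        constructor
        · nlinarith
        · linarith
    · have : g s = 0 := by
        by_cases h : s ∈ F
        · by_contra h'; exact hsF ⟨h, h'⟩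
        · exact hgF s h
      rw [this]; simpa using hx s
  refine ⟨fun s => x s + τ * g s, hz1, ?_, ?_, ?_⟩
  · intro c
    calc ∑ s ∈ I, (x s + τ * g s) * b s c = ∑ s ∈ I, x s * b s c + τ * ∑ s ∈ I, g s * b s c := by
          rw [Finset.mul_sum, ← Finset.sum_add_distrib]
          apply Finset.sum_congr rfl; intros; ring
      _ = _ := by rw [hgsum c]; ring
  · intro s hs
    have : g s = 0 := hgF s (by rw [hF, Finset.mem_filter]; exact hs)
    simp [this]
  · apply Finset.card_lt_card
    rw [Finset.ssubset_iff_of_subset]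
    · refine ⟨s0, hs0.1, ?_⟩
      rw [Finset.mem_filter]
      have hne := hs0.2
      beta_reduce
      have : x s0 + τ * g s0 = |g s0| / g s0 := by
        rw [hτ]; field_simp; ring
      rw [this, abs_div, abs_abs, div_self (by positivity)]
      simp
    · intro s hs
      rw [Finset.mem_filter] at hs
      beta_reduce at hs
      by_contra hsF
      have : g s = 0 := hgF s hsF
      rw [this] at hs
      apply hsF
      rw [hF, Finset.mem_filter]
      simpa using hs

lemma bg {n : ℕ} (I : Finset ℕ) (b : ℕ → Fin n → ℝ) : ∀ (k : ℕ) (x : ℕ → ℝ), (∀ s, |x s| ≤ 1) →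
    (I.filter (fun s => |x s| < 1)).card = k →
    ∃ z : ℕ → ℝ, (∀ s, |z s| ≤ 1) ∧ (∀ c, ∑ s ∈ I, z s * b s c = ∑ s ∈ I, x s * b s c) ∧
      (∀ s, ¬ (s ∈ I ∧ |x s| < 1) → z s = x s) ∧
      (I.filter (fun s => |z s| < 1)).card ≤ n := by
  intro k
  induction k using Nat.strong_induction_on with
  | _ k ih =>
    intro x hx hk
    by_cases hc : n < k
    · obtain ⟨z, h1, h2, h3, h4⟩ := bg_step I b x hx (hk ▸ hc)
      obtain ⟨z', h1', h2', h3', h4'⟩ := ih _ (hk ▸ h4) z h1 rfl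
      refine ⟨z', h1', fun c => (h2' c).trans (h2 c), ?_, h4'⟩
      intro s hs
      have e := h3 s hs
      rw [h3' s (by rw [e]; exact hs), e]
    · exact ⟨x, hx, fun _ => rfl, fun _ _ => rfl, by omega⟩

open Classical in
/-- Bárány–Grinberg rounding -/
noncomputable def R {n : ℕ} (I : Finset ℕ) (b : ℕ → Fin n → ℝ) (x : ℕ → ℝ) : ℕ → ℝ :=
  if h : ∀ s, |x s| ≤ 1 then Classical.choose (bg I b _ x h rfl) else x

lemma R_spec {n : ℕ} (I : Finset ℕ) (b : ℕ → Fin n → ℝ) (x : ℕ → ℝ) (h : ∀ s, |x s| ≤ 1) :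
    (∀ s, |R I b x s| ≤ 1) ∧ (∀ c, ∑ s ∈ I, R I b x s * b s c = ∑ s ∈ I, x s * b s c) ∧
      (∀ s, ¬ (s ∈ I ∧ |x s| < 1) → R I b x s = x s) ∧
      (I.filter (fun s => |R I b x s| < 1)).card ≤ n := by
  unfold R
  rw [dif_pos h]
  exact Classical.choose_spec (bg I b _ x h rfl)

/-- interval of the node -/
def nodeI (d off : ℕ) : Finset ℕ := Finset.Ico off (off + 2 ^ d)

/-- combination of the children -/
def glue (m : ℕ) (y₁ y₂ : ℕ → ℝ) : ℕ → ℝ := fun s => if s < m then y₁ s else y₂ s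

/-- restriction -/
def mask {n : ℕ} (I : Finset ℕ) (b : ℕ → Fin n → ℝ) : ℕ → Fin n → ℝ := fun s => if s ∈ I then b s else 0

/-- The distributed Bárány–Grinberg tree -/
noncomputable def Y {n : ℕ} (b : ℕ → Fin n → ℝ) : ℕ → ℕ → ℕ → ℝ
  | 0, _ => fun _ => 0
  | d + 1, off => R (nodeI (d + 1) off) (mask (nodeI (d + 1) off) b)
      (glue (off + 2 ^ d) (Y b d off) (Y b d (off + 2 ^ d)))

lemma nodeI_succ (d off : ℕ) : nodeI (d + 1) off = nodeI d off ∪ nodeI d (off + 2 ^ d) := by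
  ext s; simp only [nodeI, Finset.mem_union, Finset.mem_Ico, pow_succ]; omega

lemma nodeI_disj (d off : ℕ) : Disjoint (nodeI d off) (nodeI d (off + 2 ^ d)) := by
  rw [Finset.disjoint_left]; intro s; simp only [nodeI, Finset.mem_Ico]; omega

lemma glue_left {d off s : ℕ} (y₁ y₂ : ℕ → ℝ) (hs : s ∈ nodeI d off) :
    glue (off + 2 ^ d) y₁ y₂ s = y₁ s := by
  simp only [nodeI, Finset.mem_Ico] at hs; simp [glue, hs.2]

lemma glue_right {d off s : ℕ} (y₁ y₂ : ℕ → ℝ) (hs : s ∈ nodeI d (off + 2 ^ d)) :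
    glue (off + 2 ^ d) y₁ y₂ s = y₂ s := by
  simp only [nodeI, Finset.mem_Ico] at hs; unfold glue; rw [if_neg (by omega)]

lemma Y_abs {n : ℕ} (b : ℕ → Fin n → ℝ) (d : ℕ) : ∀ off s, |Y b d off s| ≤ 1 := by
  induction d with
  | zero => intro off s; simp [Y]
  | succ d ih =>
    intro off
    refine (R_spec _ _ _ ?_).1
    intro s; unfold glue; split_ifs
    · exact ih _ _
    · exact ih _ _

lemma Y_succ_spec {n : ℕ} (b : ℕ → Fin n → ℝ) (d off : ℕ) :
    (∀ s, |Y b (d + 1) off s| ≤ 1) ∧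
    (∀ c, ∑ s ∈ nodeI (d + 1) off, Y b (d + 1) off s * mask (nodeI (d + 1) off) b s c
      = ∑ s ∈ nodeI (d + 1) off, glue (off + 2 ^ d) (Y b d off) (Y b d (off + 2 ^ d)) s
          * mask (nodeI (d + 1) off) b s c) ∧
    (∀ s, ¬ (s ∈ nodeI (d + 1) off ∧ |glue (off + 2 ^ d) (Y b d off) (Y b d (off + 2 ^ d)) s| < 1) →
      Y b (d + 1) off s = glue (off + 2 ^ d) (Y b d off) (Y b d (off + 2 ^ d)) s) ∧
    ((nodeI (d + 1) off).filter (fun s => |Y b (d + 1) off s| < 1)).card ≤ n :=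
  R_spec (nodeI (d + 1) off) (mask (nodeI (d + 1) off) b)
    (glue (off + 2 ^ d) (Y b d off) (Y b d (off + 2 ^ d))) (by
      intro s; unfold glue; split_ifs
      · exact Y_abs _ _ _ _
      · exact Y_abs _ _ _ _)

lemma Y_frac {n : ℕ} (hn : 1 ≤ n) (b : ℕ → Fin n → ℝ) (d off : ℕ) :
    ((nodeI d off).filter (fun s => |Y b d off s| < 1)).card ≤ n := by
  cases d with
  | zero =>
    refine (Finset.card_le_card (Finset.filter_subset _ _)).trans ?_
    simp [nodeI, hn]
  | succ d => exact (Y_succ_spec b d off).2.2.2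

lemma Y_sum {n : ℕ} (b : ℕ → Fin n → ℝ) (d : ℕ) : ∀ off c,
    ∑ s ∈ nodeI d off, Y b d off s * b s c = 0 := by
  induction d with
  | zero => intro off c; simp [Y]
  | succ d ih =>
    intro off c
    have h := (Y_succ_spec b d off).2.1 c
    have hm : ∀ w : ℕ → ℝ, ∑ s ∈ nodeI (d + 1) off, w s * mask (nodeI (d + 1) off) b s c
        = ∑ s ∈ nodeI (d + 1) off, w s * b s c := by
      intro w
      apply Finset.sum_congr rfl
      intro s hs
      simp [mask, hs]
    rw [hm, hm] at h
    refine h.trans ?_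
    rw [nodeI_succ, Finset.sum_union (nodeI_disj d off)]
    have e1 := ih off c
    have e2 := ih (off + 2 ^ d) c
    rw [Finset.sum_congr rfl (fun s hs => by rw [glue_left _ _ hs]),
      Finset.sum_congr (s₁ := nodeI d (off + 2 ^ d)) rfl (fun s hs => by rw [glue_right _ _ hs]), e1, e2, add_zero]

lemma Y_local {n : ℕ} (b b' : ℕ → Fin n → ℝ) (d : ℕ) : ∀ off,
    (∀ s ∈ nodeI d off, b s = b' s) → Y b d off = Y b' d off := by
  induction d with
  | zero => intro off _; rfl
  | succ d ih =>
    intro off h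
    have hm : mask (nodeI (d + 1) off) b = mask (nodeI (d + 1) off) b' := by
      funext s; unfold mask; split_ifs with hs
      · exact h s hs
      · rfl
    rw [nodeI_succ] at h
    have e1 := ih off (fun s hs => h s (Finset.mem_union_left _ hs))
    have e2 := ih (off + 2 ^ d) (fun s hs => h s (Finset.mem_union_right _ hs))
    unfold Y
    rw [hm, e1, e2]

lemma glue_frac {n : ℕ} (hn : 1 ≤ n) (b : ℕ → Fin n → ℝ) (d off : ℕ) :
    ((nodeI (d + 1) off).filter
      (fun s => |glue (off + 2 ^ d) (Y b d off) (Y b d (off + 2 ^ d)) s| < 1)).card ≤ 2 * n := by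
  have h1 := Y_frac hn b d off
  have h2 := Y_frac hn b d (off + 2 ^ d)
  rw [nodeI_succ, Finset.filter_union]
  refine (Finset.card_union_le _ _).trans ?_
  rw [Finset.filter_congr (fun s hs => by rw [glue_left _ _ hs]),
      Finset.filter_congr (s := nodeI d (off + 2 ^ d)) (fun s hs => by rw [glue_right _ _ hs])]
  omega

lemma Y_change {n : ℕ} (hn : 1 ≤ n) (b b' : ℕ → Fin n → ℝ) (i : ℕ) (hb : ∀ s, s ≠ i → b s = b' s) (d : ℕ) :
    ∀ off, ((nodeI d off).filter (fun s => Y b d off s ≠ Y b' d off s)).card ≤ 4 * n * d := by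
  induction d with
  | zero => intro off; simp [Y]
  | succ d ih =>
    intro off
    set x := glue (off + 2 ^ d) (Y b d off) (Y b d (off + 2 ^ d)) with hx
    set x' := glue (off + 2 ^ d) (Y b' d off) (Y b' d (off + 2 ^ d)) with hx'
    have hsub : (nodeI (d + 1) off).filter (fun s => Y b (d + 1) off s ≠ Y b' (d + 1) off s)
        ⊆ ((nodeI (d + 1) off).filter (fun s => |x s| < 1) ∪ (nodeI (d + 1) off).filter (fun s => |x' s| < 1))
          ∪ (nodeI (d + 1) off).filter (fun s => x s ≠ x' s) := by
      intro s hs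
      rw [Finset.mem_filter] at hs
      by_contra hcon
      simp only [Finset.mem_union, Finset.mem_filter, not_or] at hcon
      have e1 : Y b (d + 1) off s = x s := (Y_succ_spec b d off).2.2.1 s hcon.1.1
      have e2 : Y b' (d + 1) off s = x' s := (Y_succ_spec b' d off).2.2.1 s hcon.1.2
      apply hcon.2
      refine ⟨hs.1, ?_⟩
      rw [← e1, ← e2]; exact hs.2
    have h1 := glue_frac hn b d off
    have h2 := glue_frac hn b' d off
    have h3 : ((nodeI (d + 1) off).filter (fun s => x s ≠ x' s)).card ≤ 4 * n * d := by
      rw [nodeI_succ, Finset.filter_union]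
      refine (Finset.card_union_le _ _).trans ?_
      rw [Finset.filter_congr (q := fun s => Y b d off s ≠ Y b' d off s)
          (fun s hs => by rw [hx, hx', glue_left _ _ hs, glue_left _ _ hs]),
        Finset.filter_congr (s := nodeI d (off + 2 ^ d))
          (q := fun s => Y b d (off + 2 ^ d) s ≠ Y b' d (off + 2 ^ d) s)
          (fun s hs => by rw [hx, hx', glue_right _ _ hs, glue_right _ _ hs])]
      by_cases hi : i < off + 2 ^ d
      · have e := Y_local b b' d (off + 2 ^ d) (fun s hs => hb s (by
          simp only [nodeI, Finset.mem_Ico] at hs; omega))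
        have := ih off
        rw [e]; simpa using this
      · have e := Y_local b b' d off (fun s hs => hb s (by
          simp only [nodeI, Finset.mem_Ico] at hs; omega))
        have := ih (off + 2 ^ d)
        rw [e]; simpa using this
    refine (Finset.card_le_card hsub).trans ((Finset.card_union_le _ _).trans ?_)
    have h4 := Finset.card_union_le ((nodeI (d + 1) off).filter (fun s => |x s| < 1))
      ((nodeI (d + 1) off).filter (fun s => |x' s| < 1))
    rw [← hx] at h1
    rw [← hx'] at h2
    have : 4 * n * (d + 1) = 4 * n * d + 4 * n := by ring
    rw [this]
    linarith

lemma exists_sign {n : ℕ} (I : Finset ℕ) (b : ℕ → Fin n → ℝ) (y : ℕ → ℝ) :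
    ∃ σ : ℕ → ℤ, (∀ s, σ s = 1 ∨ σ s = -1) ∧ (∀ s, y s = 1 → σ s = 1) ∧ (∀ s, y s = -1 → σ s = -1) ∧
      ((∀ s c, |b s c| ≤ 1) → (∀ s, |y s| ≤ 1) → (I.filter (fun s => |y s| < 1)).card ≤ n →
        ∀ c, |∑ s ∈ I, ((σ s : ℝ) - y s) * b s c| ≤ 4097 * Real.sqrt n) := by
  classical
  have key : ∃ χ : ℕ → ℤ, (∀ s, χ s = 1 ∨ χ s = -1) ∧
      ((∀ s c, |b s c| ≤ 1) → (∀ s, |y s| ≤ 1) → (I.filter (fun s => |y s| < 1)).card ≤ n →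
        ∀ c, |∑ s ∈ I.filter (fun s => |y s| < 1), ((χ s : ℝ) - y s) * b s c| ≤ 4097 * Real.sqrt n) := by
    by_cases h : (∀ s c, |b s c| ≤ 1) ∧ (∀ s, |y s| ≤ 1) ∧ (I.filter (fun s => |y s| < 1)).card ≤ n
    · obtain ⟨χ, h1, h2⟩ := lindisc b h.1 _ h.2.2 y h.2.1
      exact ⟨χ, h1, fun _ _ _ => h2⟩
    · exact ⟨fun _ => 1, by simp, fun h1 h2 h3 => absurd ⟨h1, h2, h3⟩ h⟩
  obtain ⟨χ, h1, h2⟩ := key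
  refine ⟨fun s => if y s = 1 then 1 else if y s = -1 then -1 else χ s, ?_, ?_, ?_, ?_⟩
  · intro s; dsimp only; split_ifs
    · simp
    · simp
    · exact h1 s
  · intro s hs; simp [hs]
  · intro s hs
    have : ¬ ((-1 : ℝ) = 1) := by norm_num
    simp [hs, this]
  · intro hb hy hc c
    refine le_trans (le_of_eq ?_) (h2 hb hy hc c)
    congr 1
    rw [Finset.sum_filter]
    apply Finset.sum_congr rfl
    intro s _
    beta_reduce
    by_cases e1 : y s = 1
    · simp [e1]
    · by_cases e2 : y s = -1
      · rw [if_neg e1, if_pos e2, if_neg (by rw [e2]; norm_num), e2]; norm_num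
      · have : |y s| < 1 := by
          refine lt_of_le_of_ne (hy s) ?_
          intro h
          rcases eq_or_eq_neg_of_abs_eq h with h | h
          · exact e1 h
          · exact e2 h
        rw [if_neg e1, if_neg e2, if_pos this]

/-- integral rounding -/
noncomputable def Sg {n : ℕ} (I : Finset ℕ) (b : ℕ → Fin n → ℝ) (y : ℕ → ℝ) : ℕ → ℤ :=
  Classical.choose (exists_sign I b y)

lemma Sg_spec {n : ℕ} (I : Finset ℕ) (b : ℕ → Fin n → ℝ) (y : ℕ → ℝ) :
    (∀ s, Sg I b y s = 1 ∨ Sg I b y s = -1) ∧ (∀ s, y s = 1 → Sg I b y s = 1) ∧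
      (∀ s, y s = -1 → Sg I b y s = -1) ∧
      ((∀ s c, |b s c| ≤ 1) → (∀ s, |y s| ≤ 1) → (I.filter (fun s => |y s| < 1)).card ≤ n →
        ∀ c, |∑ s ∈ I, ((Sg I b y s : ℝ) - y s) * b s c| ≤ 4097 * Real.sqrt n) :=
  Classical.choose_spec (exists_sign I b y)

/-- current vectors -/
def bOf {n : ℕ} (u : ℕ → Update n) (t : ℕ) : ℕ → Fin n → ℝ :=
  fun s => if s ∈ active u t then vecAt u s else 0

lemma active_lt {n : ℕ} (u : ℕ → Update n) (t : ℕ) : ∀ s ∈ active u t, s < t := by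
  induction t with
  | zero => intro s hs; simp [active] at hs
  | succ t ih =>
    intro s hs
    unfold active at hs
    split at hs
    · rw [Finset.mem_insert] at hs
      rcases hs with h | h
      · omega
      · have := ih s h; omega
    · have := ih s (Finset.mem_of_mem_erase hs); omega

lemma active_congr {n : ℕ} (u u' : ℕ → Update n) (t : ℕ) (h : ∀ s < t, u s = u' s) :
    active u t = active u' t := by
  induction t with
  | zero => rfl
  | succ t ih =>
    unfold active
    rw [ih (fun s hs => h s (by omega)), h t (by omega)]

lemma bOf_congr {n : ℕ} (u u' : ℕ → Update n) (t : ℕ) (h : ∀ s < t, u s = u' s) :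
    bOf u t = bOf u' t := by
  funext s
  unfold bOf
  rw [active_congr u u' t h]
  split_ifs with hs
  · unfold vecAt; rw [h s (active_lt _ _ s hs)]
  · rfl

lemma bOf_step {n : ℕ} (u : ℕ → Update n) (t : ℕ) :
    ∃ i, ∀ s, s ≠ i → bOf u t s = bOf u (t + 1) s := by
  cases hu : u t with
  | inl v =>
    refine ⟨t, fun s hs => ?_⟩
    have : active u (t + 1) = insert t (active u t) := by rw [active, hu]
    unfold bOf; rw [this]; simp [hs]
  | inr r =>
    refine ⟨r, fun s hs => ?_⟩
    have : active u (t + 1) = (active u t).erase r := by rw [active, hu]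
    unfold bOf; rw [this]; simp [hs]

lemma bOf_abs {n : ℕ} (u : ℕ → Update n)
    (hu : ∀ (t : ℕ) (v : Fin n → ℝ), u t = Sum.inl v → ∀ c, |v c| ≤ 1) (t s : ℕ) (c : Fin n) :
    |bOf u t s c| ≤ 1 := by
  unfold bOf
  split_ifs
  · unfold vecAt
    cases h : u s with
    | inl v => exact hu s v h c
    | inr r => simp
  · simp

/-- the algorithm -/
noncomputable def algo (n d : ℕ) (l : List (Update n)) : ℕ → ℤ :=
  let b := bOf (fun i => l.getD i (Sum.inr 0)) l.length
  Sg (nodeI d 0) b (Y b d 0)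

lemma sigOf_algo {n : ℕ} (d : ℕ) (u : ℕ → Update n) (t : ℕ) :
    sigOf (algo n d) u t = Sg (nodeI d 0) (bOf u t) (Y (bOf u t) d 0) := by
  unfold sigOf algo
  have : bOf (fun i => ((List.range t).map u).getD i (Sum.inr 0)) ((List.range t).map u).length
      = bOf u t := by
    simp only [List.length_map, List.length_range]
    apply bOf_congr
    intro s hs
    simp [List.getD, hs]
  simp only [this]

lemma sum_active {n : ℕ} (u : ℕ → Update n) (t d : ℕ) (h : t ≤ 2 ^ d) (w : ℕ → ℝ) (c : Fin n) :
    ∑ s ∈ active u t, w s * vecAt u s c = ∑ s ∈ nodeI d 0, w s * bOf u t s c := by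
  have hsub : active u t ⊆ nodeI d 0 := by
    intro s hs
    have := active_lt u t s hs
    simp only [nodeI, Finset.mem_Ico]; omega
  rw [← Finset.sum_subset hsub]
  · apply Finset.sum_congr rfl
    intro s hs; simp [bOf, hs]
  · intro s _ hs; simp [bOf, hs]

end DVB

/-- **Fully-dynamic vector balancing (Theorem 1 / distributed Bárány–Grinberg).**
There is a deterministic online algorithm which, for any adaptively chosen sequence of
`T` insertions/deletions of vectors in `[-1,1]^n`, maintains a `±1` signing of the
active vectors of discrepancy `O(√n)` with total recourse `O(n log T)` per update in an
amortized sense; moreover it maintains a fractional assignment `y ∈ [-1,1]` over the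
active vectors with `∑ y_s a_s = 0`, at most `n` fractional coordinates, and at most
`O(n log T)` coordinate changes per update. -/
theorem stmt19 :
    ∃ C : ℝ, 0 < C ∧
      ∀ (n T : ℕ),
        ∃ Alg : List (Update n) → ℕ → ℤ,
          ∀ u : ℕ → Update n,
            (∀ (t : ℕ) (v : Fin n → ℝ), u t = Sum.inl v → ∀ c, |v c| ≤ 1) →
            (∀ (t s : ℕ), u t = Sum.inr s → s ∈ active u t) →
            (∀ t : ℕ, ∀ s ∈ active u t, sigOf Alg u t s = 1 ∨ sigOf Alg u t s = -1) ∧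
            (∀ t ≤ T, ∀ c : Fin n,
              |∑ s ∈ active u t, (sigOf Alg u t s : ℝ) * vecAt u s c|
                ≤ C * Real.sqrt n) ∧
            ((∑ t ∈ Finset.range T,
                ((active u (t + 1) ∩ active u t).filter
                  (fun s => sigOf Alg u (t + 1) s ≠ sigOf Alg u t s)).card : ℝ)
              ≤ C * n * ((Nat.log 2 T : ℝ) + 1) * T) ∧
            (∃ y : ℕ → ℕ → ℝ,
              (∀ t s : ℕ, |y t s| ≤ 1) ∧
              (∀ t ≤ T, ∀ c : Fin n, ∑ s ∈ active u t, y t s * vecAt u s c = 0) ∧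
              (∀ t ≤ T,
                ({s : ℕ | s ∈ active u t ∧ -1 < y t s ∧ y t s < 1}).ncard ≤ n) ∧
              (∀ t < T,
                (({s : ℕ | s ∈ active u t ∪ active u (t + 1) ∧
                    y (t + 1) s ≠ y t s}).ncard : ℝ)
                  ≤ C * n * ((Nat.log 2 T : ℝ) + 1))) := by
  refine ⟨4097, by norm_num, ?_⟩
  intro n T
  rcases Nat.eq_zero_or_pos n with rfl | hn
  · refine ⟨fun _ _ => 1, ?_⟩
    intro u _ _
    refine ⟨fun _ _ _ => Or.inl rfl, fun _ _ c => c.elim0, ?_, fun _ _ => 1, ?_, ?_, ?_, ?_⟩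
    · simp [sigOf]
    · simp
    · exact fun _ _ c => c.elim0
    · simp
    · simp
  set d := Nat.log 2 T + 1 with hd
  have hT : T ≤ 2 ^ d := (Nat.lt_pow_succ_log_self (by norm_num) T).le
  have hdR : (Nat.log 2 T : ℝ) + 1 = (d : ℝ) := by rw [hd]; push_cast; rfl
  have hd1 : (1 : ℝ) ≤ d := by rw [← hdR]; linarith [Nat.cast_nonneg (α := ℝ) (Nat.log 2 T)]
  refine ⟨DVB.algo n d, ?_⟩
  intro u hu _
  have hin : ∀ t ≤ T, ∀ s ∈ active u t, s ∈ DVB.nodeI d 0 := by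
    intro t ht s hs
    have := DVB.active_lt u t s hs
    simp only [DVB.nodeI, Finset.mem_Ico]; omega
  have hchange : ∀ t, ((DVB.nodeI d 0).filter
      (fun s => DVB.Y (DVB.bOf u t) d 0 s ≠ DVB.Y (DVB.bOf u (t + 1)) d 0 s)).card ≤ 4 * n * d := by
    intro t
    obtain ⟨i, hi⟩ := DVB.bOf_step u t
    exact DVB.Y_change hn _ _ i hi d 0
  refine ⟨?_, ?_, ?_, fun t s => DVB.Y (DVB.bOf u t) d 0 s, ?_, ?_, ?_, ?_⟩
  · intro t s _
    rw [DVB.sigOf_algo]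
    exact (DVB.Sg_spec _ _ _).1 s
  · intro t ht c
    rw [DVB.sigOf_algo, DVB.sum_active u t d (ht.trans hT)
      (fun s => (DVB.Sg (DVB.nodeI d 0) (DVB.bOf u t) (DVB.Y (DVB.bOf u t) d 0) s : ℝ)) c]
    have h := (DVB.Sg_spec (DVB.nodeI d 0) (DVB.bOf u t) (DVB.Y (DVB.bOf u t) d 0)).2.2.2
      (DVB.bOf_abs u hu t) (DVB.Y_abs _ _ _) (DVB.Y_frac hn _ _ _) c
    simp_rw [sub_mul] at h
    rw [Finset.sum_sub_distrib, DVB.Y_sum, sub_zero] at h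
    exact h
  · rw [hdR]
    have hstep : ∀ t ∈ Finset.range T, (((active u (t + 1) ∩ active u t).filter
        (fun s => sigOf (DVB.algo n d) u (t + 1) s ≠ sigOf (DVB.algo n d) u t s)).card : ℝ)
        ≤ 4097 * n * d := by
      intro t ht
      rw [Finset.mem_range] at ht
      have hsub : (active u (t + 1) ∩ active u t).filter
          (fun s => sigOf (DVB.algo n d) u (t + 1) s ≠ sigOf (DVB.algo n d) u t s)
          ⊆ (DVB.nodeI d 0).filter
            (fun s => DVB.Y (DVB.bOf u t) d 0 s ≠ DVB.Y (DVB.bOf u (t + 1)) d 0 s)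
          ∪ (DVB.nodeI d 0).filter (fun s => |DVB.Y (DVB.bOf u t) d 0 s| < 1) := by
        intro s hs
        rw [Finset.mem_filter, Finset.mem_inter] at hs
        have hsI := hin t ht.le s hs.1.2
        by_contra hcon
        simp only [Finset.mem_union, Finset.mem_filter, not_or, hsI, true_and, not_not, not_lt] at hcon
        apply hs.2
        rw [DVB.sigOf_algo, DVB.sigOf_algo]
        have habs := le_antisymm (DVB.Y_abs (DVB.bOf u t) d 0 s) hcon.2
        have s1 := DVB.Sg_spec (DVB.nodeI d 0) (DVB.bOf u t) (DVB.Y (DVB.bOf u t) d 0)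
        have s2 := DVB.Sg_spec (DVB.nodeI d 0) (DVB.bOf u (t + 1)) (DVB.Y (DVB.bOf u (t + 1)) d 0)
        rcases eq_or_eq_neg_of_abs_eq habs with h | h
        · exact (s2.2.1 s (hcon.1 ▸ h)).trans (s1.2.1 s h).symm
        · exact (s2.2.2.1 s (hcon.1 ▸ h)).trans (s1.2.2.1 s h).symm
      have h1 := (Finset.card_le_card hsub).trans (Finset.card_union_le _ _)
      have h2 := hchange t
      have h3 := DVB.Y_frac hn (DVB.bOf u t) d 0
      have h4 := h1.trans (add_le_add h2 h3)
      have h5 : ((((active u (t + 1) ∩ active u t).filter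
        (fun s => sigOf (DVB.algo n d) u (t + 1) s ≠ sigOf (DVB.algo n d) u t s)).card : ℕ) : ℝ)
          ≤ 4 * n * d + n := by exact_mod_cast h4
      have hn0 : (0 : ℝ) ≤ n := Nat.cast_nonneg n
      nlinarith
    push_cast
    refine (Finset.sum_le_sum hstep).trans (le_of_eq ?_)
    rw [Finset.sum_const, Finset.card_range, nsmul_eq_mul]; ring
  · exact fun t s => DVB.Y_abs _ _ _ s
  · intro t ht c
    rw [DVB.sum_active u t d (ht.trans hT) (fun s => DVB.Y (DVB.bOf u t) d 0 s) c]
    exact DVB.Y_sum _ _ _ _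
  · intro t ht
    refine le_trans ?_ (DVB.Y_frac hn (DVB.bOf u t) d 0)
    rw [← Set.ncard_coe_finset]
    apply Set.ncard_le_ncard _ (Finset.finite_toSet _)
    intro s hs
    simp only [Set.mem_ofPred_eq] at hs
    simp only [Finset.coe_filter, Set.mem_ofPred_eq]
    exact ⟨hin t ht s hs.1, abs_lt.2 hs.2⟩
  · intro t ht
    rw [hdR]
    have h : ({s : ℕ | s ∈ active u t ∪ active u (t + 1) ∧
        DVB.Y (DVB.bOf u (t + 1)) d 0 s ≠ DVB.Y (DVB.bOf u t) d 0 s}).ncard ≤ 4 * n * d := by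
      refine le_trans ?_ (hchange t)
      rw [← Set.ncard_coe_finset]
      apply Set.ncard_le_ncard _ (Finset.finite_toSet _)
      intro s hs
      simp only [Set.mem_ofPred_eq, Finset.mem_union] at hs
      simp only [Finset.coe_filter, Set.mem_ofPred_eq]
      refine ⟨?_, hs.2.symm⟩
      rcases hs.1 with h | h
      · exact hin t ht.le s h
      · exact hin (t + 1) ht s h
    have h' : ((({s : ℕ | s ∈ active u t ∪ active u (t + 1) ∧
        DVB.Y (DVB.bOf u (t + 1)) d 0 s ≠ DVB.Y (DVB.bOf u t) d 0 s}).ncard : ℕ) : ℝ) ≤ 4 * n * d := by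
      exact_mod_cast h
    refine h'.trans ?_
    have : (0 : ℝ) ≤ n * d := by positivity
    nlinarith
end
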